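/- arXiv:0804.2041 — 4 statements merged into one kernel-verified Lean document; each statement's English description precedes it below -/
import Mathlib

section
/- Let n ≥ 2, and in ℚ^n set λ = (3/2, 1/2, …, 1/2), μ = (1/2, …, 1/2), and ρ = ((2n−1)/2, (2n−3)/2, …, 1/2). In the group algebra ℤ[ℚ^n] (the algebra with ℤ-basis the symbols e^ν for ν ∈ ℚ^n, with e^ν · e^ζ = e^{ν+ζ}), the following identity holds: Σ_{(σ,ε) ∈ W_n} sgn(σ)·(Π_i ε_i)·e^{(σ,ε)·(λ+ρ)} = ( Σ_{ν ∈ W_n·λ} e^ν + n · Σ_{ν ∈ W_n·μ} e^ν ) · ( Σ_{(σ,ε) ∈ W_n} sgn(σ)·(Π_i ε_i)·e^{(σ,ε)·ρ} ). -/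
/-- The hyperoctahedral group `Wₙ` of signed permutations, realized as pairs
`(σ, ε)` with `σ` a permutation of `Fin n` and `ε : Fin n → ℤˣ` a sign vector. -/
abbrev SignedPerm (n : ℕ) := Equiv.Perm (Fin n) × (Fin n → ℤˣ)

/-- The action of a signed permutation `(σ, ε)` on `x ∈ ℚⁿ`:
`((σ,ε)·x)ᵢ = εᵢ · x_{σ⁻¹(i)}`. -/
def signedPermAct {n : ℕ} (p : SignedPerm n) (x : Fin n → ℚ) : Fin n → ℚ :=
  fun i => ((p.2 i : ℤ) : ℚ) * x (p.1⁻¹ i)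

/-- The sign of a signed permutation `(σ, ε)`: `sgn(σ)·Πᵢ εᵢ`, the determinant
of its action on `ℚⁿ`. -/
def signedPermSign {n : ℕ} (p : SignedPerm n) : ℤ :=
  (Equiv.Perm.sign p.1 : ℤ) * ∏ i, (p.2 i : ℤ)

/-- The weight `λ = ϖ₁ + ϖₙ = (3/2, 1/2, …, 1/2)` of `Spin_{2n+1}` in Bourbaki
coordinates. -/
def lamWt (n : ℕ) : Fin n → ℚ := fun i => if (i : ℕ) = 0 then 3/2 else 1/2

/-- The minuscule weight `μ = ϖₙ = (1/2, …, 1/2)`. -/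
def muWt (n : ℕ) : Fin n → ℚ := fun _ => 1/2

/-- The half-sum of the positive roots of type `Bₙ`,
`ρ = ((2n-1)/2, (2n-3)/2, …, 1/2)` (0-indexed: `ρᵢ = (2n - 2i - 1)/2`). -/
def rhoWt (n : ℕ) : Fin n → ℚ := fun i => (2 * (n : ℚ) - 2 * ((i : ℕ) : ℚ) - 1) / 2

/-!
Write `m(x)` for the sum of `e^ν` over the orbit of `x`, and `J(y)` for the alternating sum
`∑ sgn(w) e^{w y}`. Then `m(x) J(y) = ∑ J(ν + y)` over the orbit of `x` (Brauer's formula), and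
`J(z) = 0` whenever `z` is fixed by a reflection. For `m(ϖₙ) J(ρ)` and for `m(ϖ₁) J(ϖₙ + ρ)`, every
non-dominant `ν` moves `y` exactly onto a wall of the dominant chamber, so only the dominant term
survives. Hence `m(ϖ₁) m(ϖₙ) J(ρ) = J(λ + ρ)`. On the other hand `m(ϖ₁) m(ϖₙ) = m(λ) + n m(ϖₙ)`,
because adding `±eⱼ` to `ε/2` either lengthens its `j`-th entry, which gives each weight of the
orbit of `λ` once, or flips its sign, which gives each weight of the orbit of `ϖₙ` once for every
`j`.
-/

/-- The product of the hyperoctahedral group, for which `signedPermAct` is an action. It is not the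
componentwise multiplication that `SignedPerm n` carries as a product type. -/
def SignedPerm.comp {n : ℕ} (p q : SignedPerm n) : SignedPerm n :=
  (p.1 * q.1, fun i => p.2 i * q.2 (p.1⁻¹ i))

/-- The orbit of the weight `x` under the hyperoctahedral group, as a finite set (so without
multiplicities). -/
def weylOrbit {n : ℕ} (x : Fin n → ℚ) : Finset (Fin n → ℚ) :=
  Finset.univ.image fun p : SignedPerm n => signedPermAct p x

/-- The orbit sum `m(x) = ∑ e^ν` over the distinct weights `ν` of the orbit of `x`. -/
noncomputable def weylOrbitSum {n : ℕ} (x : Fin n → ℚ) : AddMonoidAlgebra ℤ (Fin n → ℚ) :=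
  ∑ ν ∈ weylOrbit x, AddMonoidAlgebra.single ν 1

/-- The alternating sum `J(x) = ∑ sgn(w) e^{w x}` over the hyperoctahedral group; `J(ρ)` is the Weyl
denominator and `J(λ + ρ)` the numerator of the character with highest weight `λ`. -/
noncomputable def weylAltSum {n : ℕ} (x : Fin n → ℚ) : AddMonoidAlgebra ℤ (Fin n → ℚ) :=
  ∑ p : SignedPerm n, AddMonoidAlgebra.single (signedPermAct p x) (signedPermSign p)

/-- Dominance of a weight of type `B`, i.e. membership in the closed fundamental chamber:
`x₁ ≥ x₂ ≥ … ≥ xₙ ≥ 0`. -/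
structure IsDominant {n : ℕ} (x : Fin n → ℚ) : Prop where
  antitone : Antitone x
  nonneg : ∀ i, 0 ≤ x i

/-- The weight `ε/2` of the spin representation attached to a sign vector `ε`. -/
def spinWt {n : ℕ} (ε : Fin n → ℤˣ) : Fin n → ℚ := fun i => ((ε i : ℤ) : ℚ) * (1 / 2)

section Action

variable {n : ℕ}

lemma signedPermAct_add (p : SignedPerm n) (x y : Fin n → ℚ) :
    signedPermAct p (x + y) = signedPermAct p x + signedPermAct p y := by
  funext i
  exact mul_add _ _ _

lemma signedPermAct_comp (p q : SignedPerm n) (x : Fin n → ℚ) :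
    signedPermAct (p.comp q) x = signedPermAct p (signedPermAct q x) := by
  funext i
  simp [signedPermAct, SignedPerm.comp, mul_assoc]

lemma signedPermSign_comp (p q : SignedPerm n) :
    signedPermSign (p.comp q) = signedPermSign p * signedPermSign q := by
  have hperm : ∏ i, (q.2 (p.1⁻¹ i) : ℤ) = ∏ i, (q.2 i : ℤ) :=
    Equiv.prod_comp p.1⁻¹ fun i => (q.2 i : ℤ)
  simp only [signedPermSign, SignedPerm.comp, Equiv.Perm.sign_mul, Units.val_mul,
    Finset.prod_mul_distrib, hperm]
  ring

lemma SignedPerm.comp_left_injective (r : SignedPerm n) :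
    Function.Injective fun p : SignedPerm n => p.comp r := by
  rintro ⟨σ, ε⟩ ⟨τ, δ⟩ h
  obtain ⟨hperm, hsign⟩ := Prod.mk.inj h
  obtain rfl : σ = τ := mul_right_cancel hperm
  exact Prod.ext rfl (funext fun i => mul_right_cancel (congrFun hsign i))

lemma signedPermAct_injective (p : SignedPerm n) : Function.Injective (signedPermAct p) := by
  intro x y h
  funext i
  simpa [signedPermAct] using congrFun h (p.1 i)

lemma abs_signedPermAct (p : SignedPerm n) (x : Fin n → ℚ) (i : Fin n) :
    |signedPermAct p x i| = |x (p.1⁻¹ i)| := by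
  rw [signedPermAct, abs_mul, abs_unit_intCast, one_mul]

lemma signedPermAct_single (p : SignedPerm n) (j : Fin n) (c : ℚ) :
    signedPermAct p (Pi.single j c) = Pi.single (p.1 j) (((p.2 (p.1 j) : ℤ) : ℚ) * c) := by
  funext i
  obtain ⟨k, rfl⟩ := p.1.surjective i
  rcases eq_or_ne k j with rfl | hkj
  · simp [signedPermAct]
  · simp [signedPermAct, Pi.single_eq_of_ne hkj,
      Pi.single_eq_of_ne (p.1.injective.ne hkj)]

lemma signedPermAct_muWt (p : SignedPerm n) : signedPermAct p (muWt n) = spinWt p.2 := rfl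

end Action

section Orbit

variable {n : ℕ}

lemma mem_weylOrbit {x ν : Fin n → ℚ} :
    ν ∈ weylOrbit x ↔ ∃ p : SignedPerm n, signedPermAct p x = ν := by
  simp [weylOrbit]

lemma self_mem_weylOrbit (x : Fin n → ℚ) : x ∈ weylOrbit x :=
  mem_weylOrbit.2 ⟨1, funext fun i => by simp [signedPermAct]⟩

lemma image_signedPermAct_weylOrbit (p : SignedPerm n) (x : Fin n → ℚ) :
    (weylOrbit x).image (signedPermAct p) = weylOrbit x := by
  refine Finset.eq_of_subset_of_card_le (Finset.image_subset_iff.2 fun ν hν => ?_)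
    (Finset.card_image_of_injective _ (signedPermAct_injective p)).ge
  obtain ⟨q, rfl⟩ := mem_weylOrbit.1 hν
  exact mem_weylOrbit.2 ⟨p.comp q, signedPermAct_comp p q x⟩

lemma weylOrbitSum_eq_sum {ι : Type*} [Fintype ι] {x : Fin n → ℚ} {f : ι → Fin n → ℚ}
    {g : SignedPerm n → ι} (hf : Function.Injective f) (hg : Function.Surjective g)
    (hfg : ∀ p, signedPermAct p x = f (g p)) :
    weylOrbitSum x = ∑ i, AddMonoidAlgebra.single (f i) 1 := by
  have horbit : weylOrbit x = Finset.univ.image f := by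
    ext ν
    simp only [mem_weylOrbit, hfg, Finset.mem_image, Finset.mem_univ, true_and]
    exact (hg.exists (p := fun i => f i = ν)).symm
  rw [weylOrbitSum, horbit, Finset.sum_image hf.injOn]

theorem IsDominant.eq_of_mem_weylOrbit {x ν : Fin n → ℚ} (hx : IsDominant x) (hν : IsDominant ν)
    (h : ν ∈ weylOrbit x) : ν = x := by
  obtain ⟨p, rfl⟩ := mem_weylOrbit.1 h
  have hrearrange : signedPermAct p x = x ∘ ⇑p.1⁻¹ := by
    funext i
    rw [← abs_of_nonneg (hν.nonneg i), abs_signedPermAct, abs_of_nonneg (hx.nonneg _),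
      Function.comp_apply]
  have hanti : Antitone (x ∘ ⇑p.1⁻¹) := hrearrange ▸ hν.antitone
  rw [hrearrange]
  exact Tuple.unique_antitone (τ := 1) hanti hx.antitone

end Orbit

section AlternatingSum

variable {n : ℕ}

theorem weylAltSum_eq_zero_of_fixed {x : Fin n → ℚ} {r : SignedPerm n}
    (hr : signedPermAct r x = x) (hsign : signedPermSign r = -1) : weylAltSum x = 0 := by
  have hneg : weylAltSum x = -weylAltSum x := calc
    weylAltSum x = ∑ p : SignedPerm n,
        AddMonoidAlgebra.single (signedPermAct (p.comp r) x) (signedPermSign (p.comp r)) :=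
      ((Finite.injective_iff_bijective.1 (SignedPerm.comp_left_injective r)).sum_comp fun p =>
        AddMonoidAlgebra.single (signedPermAct p x) (signedPermSign p)).symm
    _ = -weylAltSum x := by
      simp only [weylAltSum, signedPermAct_comp, signedPermSign_comp, hr, hsign, mul_neg_one,
        AddMonoidAlgebra.single_neg, Finset.sum_neg_distrib]
  ext ν
  exact self_eq_neg.1 (congrArg (fun a => a.coeff ν) hneg)

lemma weylAltSum_eq_zero_of_apply_eq {x : Fin n → ℚ} {i j : Fin n} (hij : i ≠ j)
    (h : x i = x j) : weylAltSum x = 0 := by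
  refine weylAltSum_eq_zero_of_fixed (r := (Equiv.swap i j, 1)) ?_ ?_
  · funext k
    simp [signedPermAct, Equiv.apply_swap_eq_self h]
  · simp [signedPermSign, Equiv.Perm.sign_swap hij]

lemma weylAltSum_eq_zero_of_apply_eq_zero {x : Fin n → ℚ} {i : Fin n} (h : x i = 0) :
    weylAltSum x = 0 := by
  refine weylAltSum_eq_zero_of_fixed (r := (1, Pi.mulSingle i (-1))) ?_ ?_
  · funext k
    rcases eq_or_ne k i with rfl | hki
    · simp [signedPermAct, h]
    · simp [signedPermAct, hki]
  · simp [signedPermSign, ← Units.coe_prod]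

theorem weylOrbitSum_mul_weylAltSum (x y : Fin n → ℚ) :
    weylOrbitSum x * weylAltSum y = ∑ ν ∈ weylOrbit x, weylAltSum (ν + y) := by
  have hinvariant (p : SignedPerm n) :
      weylOrbitSum x = ∑ ν ∈ weylOrbit x, AddMonoidAlgebra.single (signedPermAct p ν) 1 := by
    rw [← Finset.sum_image (f := fun ν => AddMonoidAlgebra.single ν (1 : ℤ))
      (signedPermAct_injective p).injOn, image_signedPermAct_weylOrbit, weylOrbitSum]
  simp only [weylAltSum]
  rw [Finset.mul_sum, Finset.sum_comm]
  refine Finset.sum_congr rfl fun p _ => ?_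
  simp only [hinvariant p, Finset.sum_mul, AddMonoidAlgebra.single_mul_single, one_mul,
    signedPermAct_add]

theorem weylOrbitSum_mul_weylAltSum_of_walls {x y : Fin (n + 1) → ℚ} (hx : IsDominant x)
    (hstep : ∀ ν ∈ weylOrbit x, ∀ i : Fin n,
      ν i.succ ≤ ν i.castSucc ∨ (ν + y) i.succ = (ν + y) i.castSucc)
    (hlast : ∀ ν ∈ weylOrbit x, 0 ≤ ν (Fin.last n) ∨ (ν + y) (Fin.last n) = 0) :
    weylOrbitSum x * weylAltSum y = weylAltSum (x + y) := by
  rw [weylOrbitSum_mul_weylAltSum]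
  refine Finset.sum_eq_single_of_mem x (self_mem_weylOrbit x) fun ν hν hne => ?_
  by_contra hJ
  have hanti : Antitone ν := Fin.antitone_iff_succ_le.2 fun i =>
    (hstep ν hν i).resolve_right fun h =>
      hJ (weylAltSum_eq_zero_of_apply_eq i.castSucc_lt_succ.ne' h)
  have hnonneg : 0 ≤ ν (Fin.last n) :=
    (hlast ν hν).resolve_right fun h => hJ (weylAltSum_eq_zero_of_apply_eq_zero h)
  exact hne (hx.eq_of_mem_weylOrbit ⟨hanti, fun i => hnonneg.trans (hanti i.le_last)⟩ hν)

end AlternatingSum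

section FundamentalWeights

variable {n : ℕ}

lemma lamWt_succ : lamWt (n + 1) = Pi.single 0 1 + muWt (n + 1) := by
  funext i
  rcases eq_or_ne i 0 with rfl | hi
  · norm_num [lamWt, muWt]
  · simp [lamWt, muWt, hi]

lemma isDominant_muWt : IsDominant (muWt n) :=
  ⟨antitone_const, fun _ => by norm_num [muWt]⟩

lemma isDominant_single_zero : IsDominant (Pi.single 0 1 : Fin (n + 1) → ℚ) := by
  have hnonneg : (0 : Fin (n + 1) → ℚ) ≤ Pi.single 0 1 := Pi.single_nonneg.2 zero_le_one
  refine ⟨Fin.antitone_iff_succ_le.2 fun i => ?_, hnonneg⟩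
  simpa using hnonneg i.castSucc

lemma rhoWt_castSucc (i : Fin n) :
    rhoWt (n + 1) i.castSucc = rhoWt (n + 1) i.succ + 1 := by
  simp only [rhoWt, Fin.val_castSucc, Fin.val_succ]
  push_cast
  ring

lemma rhoWt_last : rhoWt (n + 1) (Fin.last n) = 1 / 2 := by
  simp only [rhoWt, Fin.val_last]
  push_cast
  ring

lemma intCast_unit_eq_one_or {R : Type*} [Ring R] (u : ℤˣ) :
    ((u : ℤ) : R) = 1 ∨ ((u : ℤ) : R) = -1 := by
  rcases Int.units_eq_one_or u with rfl | rfl <;> simp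

lemma spinWt_apply_eq_or (ε : Fin n → ℤˣ) (i : Fin n) :
    spinWt ε i = 1 / 2 ∨ spinWt ε i = -1 / 2 := by
  rcases intCast_unit_eq_one_or (R := ℚ) (ε i) with h | h <;> norm_num [spinWt, h]

lemma spinWt_apply_le_or_eq_add_one (ε : Fin n → ℤˣ) (i k : Fin n) :
    spinWt ε k ≤ spinWt ε i ∨ spinWt ε k = spinWt ε i + 1 := by
  rcases spinWt_apply_eq_or ε i with hi | hi <;> rcases spinWt_apply_eq_or ε k with hk | hk <;>
    rw [hi, hk] <;> norm_num

lemma single_apply_le_or_eq_add_one (j : Fin n) (u : ℤˣ) {i k : Fin n} (hik : i ≠ k) :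
    (Pi.single j ((u : ℤ) : ℚ) : Fin n → ℚ) k ≤ (Pi.single j ((u : ℤ) : ℚ) : Fin n → ℚ) i ∨
      (Pi.single j ((u : ℤ) : ℚ) : Fin n → ℚ) k =
        (Pi.single j ((u : ℤ) : ℚ) : Fin n → ℚ) i + 1 := by
  rcases intCast_unit_eq_one_or (R := ℚ) u with hu | hu <;>
    simp only [hu, Pi.single_apply] <;> grind

lemma single_apply_nonneg_or_eq_neg_one (j i : Fin n) (u : ℤˣ) :
    0 ≤ (Pi.single j ((u : ℤ) : ℚ) : Fin n → ℚ) i ∨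
      (Pi.single j ((u : ℤ) : ℚ) : Fin n → ℚ) i = -1 := by
  rcases intCast_unit_eq_one_or (R := ℚ) u with hu | hu <;>
    simp only [hu, Pi.single_apply] <;> grind

theorem weylOrbitSum_muWt_mul_weylAltSum_rhoWt :
    weylOrbitSum (muWt (n + 1)) * weylAltSum (rhoWt (n + 1)) =
      weylAltSum (muWt (n + 1) + rhoWt (n + 1)) := by
  refine weylOrbitSum_mul_weylAltSum_of_walls isDominant_muWt (fun ν hν i => ?_) fun ν hν => ?_ <;>
    obtain ⟨p, rfl⟩ := mem_weylOrbit.1 hν <;>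
    simp only [signedPermAct_muWt, Pi.add_apply, rhoWt_castSucc, rhoWt_last]
  · refine (spinWt_apply_le_or_eq_add_one p.2 i.castSucc i.succ).imp_right fun h => ?_
    linarith
  · rcases spinWt_apply_eq_or p.2 (Fin.last n) with h | h <;> norm_num [h]

theorem weylOrbitSum_single_mul_weylAltSum_muWt_add_rhoWt :
    weylOrbitSum (Pi.single 0 1) * weylAltSum (muWt (n + 1) + rhoWt (n + 1)) =
      weylAltSum (lamWt (n + 1) + rhoWt (n + 1)) := by
  rw [lamWt_succ, add_assoc]
  refine weylOrbitSum_mul_weylAltSum_of_walls isDominant_single_zero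
    (fun ν hν i => ?_) fun ν hν => ?_ <;>
    obtain ⟨p, rfl⟩ := mem_weylOrbit.1 hν <;>
    simp only [signedPermAct_single, mul_one, Pi.add_apply, muWt, rhoWt_castSucc, rhoWt_last]
  · refine (single_apply_le_or_eq_add_one (p.1 0) (p.2 (p.1 0))
      i.castSucc_lt_succ.ne).imp_right fun h => ?_
    linarith
  · refine (single_apply_nonneg_or_eq_neg_one (p.1 0) (Fin.last n)
      (p.2 (p.1 0))).imp_right fun h => ?_
    linarith

end FundamentalWeights

section OrbitSums

variable {n : ℕ}

lemma spinWt_injective : Function.Injective (spinWt (n := n)) := by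
  intro ε δ h
  funext i
  simpa [spinWt, Units.ext_iff] using congrFun h i

lemma single_intCast_unit_injective :
    Function.Injective fun q : Fin n × ℤˣ => (Pi.single q.1 ((q.2 : ℤ) : ℚ) : Fin n → ℚ) := by
  rintro ⟨j, s⟩ ⟨k, t⟩ h
  obtain rfl : j = k := by
    by_contra hjk
    simpa [hjk] using congrFun h j
  simpa [Units.ext_iff] using h

lemma single_add_spinWt_injective :
    Function.Injective fun q : Fin n × (Fin n → ℤˣ) =>
      Pi.single q.1 ((q.2 q.1 : ℤ) : ℚ) + spinWt q.2 := by
  rintro ⟨j, ε⟩ ⟨k, δ⟩ h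
  obtain rfl : ε = δ := by
    funext i
    have hi := congrFun h i
    simp only [Pi.add_apply, Pi.single_apply, spinWt] at hi
    have hcast : ((ε i : ℤ) : ℚ) = ((δ i : ℤ) : ℚ) := by
      rcases intCast_unit_eq_one_or (R := ℚ) (ε i) with hε | hε <;>
        rcases intCast_unit_eq_one_or (R := ℚ) (δ i) with hδ | hδ <;> grind
    exact Units.ext (by exact_mod_cast hcast)
  have hsingle := single_intCast_unit_injective (a₁ := (j, ε j)) (a₂ := (k, ε k))
    (add_right_cancel h)
  rw [(Prod.mk.inj hsingle).1]

lemma weylOrbitSum_muWt :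
    weylOrbitSum (muWt n) = ∑ ε : Fin n → ℤˣ, AddMonoidAlgebra.single (spinWt ε) 1 :=
  weylOrbitSum_eq_sum spinWt_injective Prod.snd_surjective signedPermAct_muWt

lemma weylOrbitSum_single_one (j : Fin n) :
    weylOrbitSum (Pi.single j 1) =
      ∑ k : Fin n, ∑ s : ℤˣ, AddMonoidAlgebra.single (Pi.single k ((s : ℤ) : ℚ)) 1 := by
  rw [← Fintype.sum_prod_type']
  refine weylOrbitSum_eq_sum (g := fun p => (p.1 j, p.2 (p.1 j)))
    single_intCast_unit_injective ?_ fun p => by rw [signedPermAct_single, mul_one]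
  rintro ⟨k, s⟩
  exact ⟨(Equiv.swap j k, fun _ => s), by simp⟩

lemma weylOrbitSum_lamWt_succ :
    weylOrbitSum (lamWt (n + 1)) = ∑ j : Fin (n + 1), ∑ ε : Fin (n + 1) → ℤˣ,
      AddMonoidAlgebra.single (Pi.single j ((ε j : ℤ) : ℚ) + spinWt ε) 1 := by
  rw [← Fintype.sum_prod_type']
  refine weylOrbitSum_eq_sum (g := fun p => (p.1 0, p.2)) single_add_spinWt_injective ?_ fun p => by
    rw [lamWt_succ, signedPermAct_add, signedPermAct_single, mul_one, signedPermAct_muWt]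
  rintro ⟨j, ε⟩
  exact ⟨(Equiv.swap 0 j, ε), by simp⟩

lemma single_neg_add_spinWt (j : Fin n) (ε : Fin n → ℤˣ) :
    Pi.single j (((-ε j : ℤˣ) : ℤ) : ℚ) + spinWt ε = spinWt (ε * Pi.mulSingle j (-1)) := by
  funext i
  rcases eq_or_ne i j with rfl | hij
  · simp only [Pi.add_apply, Pi.single_eq_same, spinWt, Pi.mul_apply, Pi.mulSingle_eq_same]
    push_cast
    ring
  · simp [spinWt, hij]

lemma sum_units_int_eq_add_neg {M : Type*} [AddCommMonoid M] (f : ℤˣ → M) (u : ℤˣ) :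
    ∑ s, f s = f u + f (-u) :=
  Fintype.sum_eq_add u (-u) (by simp) fun s hs =>
    absurd (Int.units_ne_iff_eq_neg.1 hs.1) hs.2

theorem weylOrbitSum_single_mul_weylOrbitSum_muWt :
    weylOrbitSum (Pi.single 0 1) * weylOrbitSum (muWt (n + 1)) =
      weylOrbitSum (lamWt (n + 1)) + (n + 1) • weylOrbitSum (muWt (n + 1)) := by
  have hflip (j : Fin (n + 1)) :
      ∑ ε : Fin (n + 1) → ℤˣ,
          AddMonoidAlgebra.single (spinWt (ε * Pi.mulSingle j (-1))) (1 : ℤ) =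
        weylOrbitSum (muWt (n + 1)) := by
    rw [weylOrbitSum_muWt]
    exact Equiv.sum_comp (Equiv.mulRight (Pi.mulSingle j (-1)))
      fun ε => AddMonoidAlgebra.single (spinWt ε) (1 : ℤ)
  calc weylOrbitSum (Pi.single 0 1) * weylOrbitSum (muWt (n + 1))
      = ∑ j : Fin (n + 1), ∑ ε : Fin (n + 1) → ℤˣ, ∑ s : ℤˣ,
          AddMonoidAlgebra.single (Pi.single j ((s : ℤ) : ℚ) + spinWt ε) 1 := by
        rw [weylOrbitSum_single_one, weylOrbitSum_muWt, Finset.sum_mul]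
        refine Finset.sum_congr rfl fun j _ => ?_
        rw [Finset.sum_mul_sum, Finset.sum_comm]
        simp only [AddMonoidAlgebra.single_mul_single, one_mul]
    _ = ∑ j : Fin (n + 1), ∑ ε : Fin (n + 1) → ℤˣ,
          (AddMonoidAlgebra.single (Pi.single j ((ε j : ℤ) : ℚ) + spinWt ε) 1 +
            AddMonoidAlgebra.single (spinWt (ε * Pi.mulSingle j (-1))) 1) := by
        refine Finset.sum_congr rfl fun j _ => Finset.sum_congr rfl fun ε _ => ?_
        rw [sum_units_int_eq_add_neg _ (ε j), single_neg_add_spinWt]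
    _ = weylOrbitSum (lamWt (n + 1)) + (n + 1) • weylOrbitSum (muWt (n + 1)) := by
        simp only [Finset.sum_add_distrib, hflip, weylOrbitSum_lamWt_succ, Finset.sum_const,
          Finset.card_univ, Fintype.card_fin]

end OrbitSums

/-- Weyl character formula identity for the Weyl module `V(λ)` of `Spin_{2n+1}`
with `λ = ϖ₁ + ϖₙ` (`n ≥ 2`): in the group algebra `ℤ[ℚⁿ]`,
`Σ_{w ∈ Wₙ} sgn(w)·e^{w(λ+ρ)}
  = (Σ_{ν ∈ Wₙ·λ} e^ν + n·Σ_{ν ∈ Wₙ·μ} e^ν)·(Σ_{w ∈ Wₙ} sgn(w)·e^{w(ρ)})`,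
i.e. the character of `V(λ)` is the orbit sum of `λ` plus `n` times the orbit
sum of `μ = ϖₙ`. -/
theorem weyl_character_lam (n : ℕ) (hn : 2 ≤ n) :
    (∑ p : SignedPerm n,
        AddMonoidAlgebra.single (signedPermAct p (lamWt n + rhoWt n))
          (signedPermSign p)) =
      ((∑ ν ∈ Finset.image (fun p : SignedPerm n => signedPermAct p (lamWt n))
            Finset.univ,
          AddMonoidAlgebra.single ν (1 : ℤ)) +
        n • ∑ ν ∈ Finset.image (fun p : SignedPerm n => signedPermAct p (muWt n))
            Finset.univ,
          AddMonoidAlgebra.single ν (1 : ℤ)) *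
      (∑ p : SignedPerm n,
        AddMonoidAlgebra.single (signedPermAct p (rhoWt n))
          (signedPermSign p)) := by
  obtain ⟨m, rfl⟩ : ∃ m, n = m + 1 := Nat.exists_eq_add_of_le' (one_le_two.trans hn)
  change weylAltSum (lamWt (m + 1) + rhoWt (m + 1)) =
    (weylOrbitSum (lamWt (m + 1)) + (m + 1) • weylOrbitSum (muWt (m + 1))) *
      weylAltSum (rhoWt (m + 1))
  rw [← weylOrbitSum_single_mul_weylOrbitSum_muWt, mul_assoc,
    weylOrbitSum_muWt_mul_weylAltSum_rhoWt, weylOrbitSum_single_mul_weylAltSum_muWt_add_rhoWt]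
end

section
/- Let n ≥ 1, and in ℚ^n set μ = (1/2, …, 1/2) and ρ = ((2n−1)/2, (2n−3)/2, …, 1/2). In the group algebra ℤ[ℚ^n] (the algebra with ℤ-basis the symbols e^ν for ν ∈ ℚ^n, with e^ν · e^ζ = e^{ν+ζ}), the following identity holds: Σ_{(σ,ε) ∈ W_n} sgn(σ)·(Π_i ε_i)·e^{(σ,ε)·(μ+ρ)} = ( Σ_{ν ∈ W_n·μ} e^ν ) · ( Σ_{(σ,ε) ∈ W_n} sgn(σ)·(Π_i ε_i)·e^{(σ,ε)·ρ} ). -/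
/-!
Write `A(x) = ∑ sgn(w) e^{w x}`. Since `Wₙ·μ` is stable under `Wₙ`, Brauer's formula gives
`(∑_{ν ∈ Wₙ·μ} e^ν) A(ρ) = ∑_{ν ∈ Wₙ·μ} A(ν + ρ)`. The weights in `Wₙ·μ` have all coordinates
`±1/2`. If `ν ≠ μ`, let `i` be the last coordinate with `νᵢ = -1/2`: consecutive coordinates of `ρ`
differ by `1` and the last one is `1/2`, so `ν + ρ` has equal coordinates `i` and `i + 1`, or is
zero at the last coordinate `i`. Either way a reflection fixes `ν + ρ` and `A(ν + ρ) = 0`, so only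
`A(μ + ρ)` survives.
-/

section Action

variable {n : ℕ}

/-- Right multiplication by `q` in the hyperoctahedral group. The instance multiplication on
`SignedPerm n` is that of the direct product, which is not compatible with `signedPermAct`; here the
multiplication is that of the semidirect product, `(σ, ε) * (τ, η) = (σ * τ, ε * (η ∘ σ⁻¹))`. -/
def signedPermMulRight (q : SignedPerm n) : SignedPerm n ≃ SignedPerm n :=
  (Equiv.mulRight q.1).prodShear fun σ => Equiv.mulRight (q.2 ∘ ⇑σ⁻¹)

lemma signedPermAct_mulRight (p q : SignedPerm n) (x : Fin n → ℚ) :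
    signedPermAct (signedPermMulRight q p) x = signedPermAct p (signedPermAct q x) := by
  funext i
  simp [signedPermAct, signedPermMulRight, mul_assoc]

lemma signedPermSign_mulRight (p q : SignedPerm n) :
    signedPermSign (signedPermMulRight q p) = signedPermSign p * signedPermSign q := by
  have prod_comp : ∏ i, (q.2 (p.1⁻¹ i) : ℤ) = ∏ i, (q.2 i : ℤ) :=
    Equiv.prod_comp p.1⁻¹ fun i => (q.2 i : ℤ)
  simp only [signedPermSign, signedPermMulRight, Equiv.prodShear_apply, Equiv.coe_mulRight,
    Pi.mul_apply, Function.comp_apply, Equiv.Perm.sign_mul, Units.val_mul,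
    Finset.prod_mul_distrib, prod_comp]
  ring

lemma signedPermAct_one (x : Fin n → ℚ) : signedPermAct 1 x = x := by
  funext i
  simp [signedPermAct]

/-- The orbit of the weight `x` under the hyperoctahedral group. -/
def weightOrbit (x : Fin n → ℚ) : Finset (Fin n → ℚ) :=
  Finset.univ.image fun p : SignedPerm n => signedPermAct p x

lemma self_mem_weightOrbit (x : Fin n → ℚ) : x ∈ weightOrbit x :=
  Finset.mem_image.2 ⟨1, Finset.mem_univ _, signedPermAct_one x⟩

lemma mapsTo_signedPermAct_weightOrbit (p : SignedPerm n) (x : Fin n → ℚ) :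
    Set.MapsTo (signedPermAct p) (weightOrbit x) (weightOrbit x) := by
  intro y hy
  obtain ⟨q, -, rfl⟩ := Finset.mem_image.1 hy
  exact Finset.mem_image.2 ⟨signedPermMulRight q p, Finset.mem_univ _, signedPermAct_mulRight p q x⟩

end Action

section AltSum

variable {n : ℕ}

/-- The alternating sum `∑ sgn(w) e^{w x}` over the hyperoctahedral group: the numerator in Weyl's
character formula for `x = λ + ρ`, the denominator for `x = ρ`. -/
noncomputable def altSum (x : Fin n → ℚ) : AddMonoidAlgebra ℤ (Fin n → ℚ) :=
  ∑ p : SignedPerm n, AddMonoidAlgebra.single (signedPermAct p x) (signedPermSign p)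

lemma signedPermSign_smul_altSum_signedPermAct (q : SignedPerm n) (x : Fin n → ℚ) :
    signedPermSign q • altSum (signedPermAct q x) = altSum x := by
  rw [altSum, altSum, Finset.smul_sum]
  refine Fintype.sum_equiv (signedPermMulRight q) _ _ fun p => ?_
  rw [signedPermAct_mulRight, signedPermSign_mulRight, AddMonoidAlgebra.smul_single, smul_eq_mul,
    mul_comm]

lemma altSum_eq_zero_of_signedPermAct_eq {q : SignedPerm n} {x : Fin n → ℚ}
    (hsign : signedPermSign q = -1) (hfix : signedPermAct q x = x) : altSum x = 0 := by
  have h_neg : -altSum x = altSum x := by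
    simpa only [hsign, hfix, neg_one_smul] using
      signedPermSign_smul_altSum_signedPermAct q x
  have := IsAddTorsionFree.of_isTorsionFree ℤ (AddMonoidAlgebra ℤ (Fin n → ℚ))
  exact neg_eq_self.1 h_neg

lemma altSum_eq_zero_of_apply_eq_zero {x : Fin n → ℚ} {j : Fin n} (hx : x j = 0) :
    altSum x = 0 := by
  refine altSum_eq_zero_of_signedPermAct_eq (q := (1, Pi.mulSingle j (-1))) ?_ ?_
  · have prod_eq : ∏ i, (Pi.mulSingle j (-1) : Fin n → ℤˣ) i = -1 := Fintype.prod_pi_mulSingle' j _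
    rw [signedPermSign, ← Units.coe_prod, prod_eq]
    simp
  · funext i
    obtain rfl | hij := eq_or_ne i j
    · simp [signedPermAct, hx]
    · simp [signedPermAct, Pi.mulSingle_eq_of_ne hij]

lemma altSum_eq_zero_of_apply_eq {x : Fin n → ℚ} {i j : Fin n} (hij : i ≠ j) (hx : x i = x j) :
    altSum x = 0 := by
  refine altSum_eq_zero_of_signedPermAct_eq (q := (Equiv.swap i j, 1)) ?_ ?_
  · simp [signedPermSign, Equiv.Perm.sign_swap hij]
  · funext k
    simpa [signedPermAct] using Equiv.apply_swap_eq_self hx k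

/-- Brauer's formula, for a multiplicity-free character with set of weights `S`. -/
lemma sum_single_mul_altSum {S : Finset (Fin n → ℚ)}
    (hS : ∀ p : SignedPerm n, Set.MapsTo (signedPermAct p) S S) (x : Fin n → ℚ) :
    (∑ ν ∈ S, AddMonoidAlgebra.single ν (1 : ℤ)) * altSum x = ∑ ν ∈ S, altSum (ν + x) := by
  simp only [altSum]
  rw [Finset.sum_mul_sum, Finset.sum_comm, Finset.sum_comm (s := S)]
  refine Finset.sum_congr rfl fun p _ => Eq.symm ?_
  have p_injOn : Set.InjOn (signedPermAct p) S := (signedPermAct_injective p).injOn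
  have p_surjOn : Set.SurjOn (signedPermAct p) S S :=
    Finset.surjOn_of_injOn_of_card_le _ (hS p) p_injOn le_rfl
  refine Finset.sum_nbij (signedPermAct p) (hS p) p_injOn p_surjOn fun ν _ => ?_
  rw [AddMonoidAlgebra.single_mul_single, one_mul, signedPermAct_add]

end AltSum

section Minuscule

variable {n : ℕ}

lemma apply_eq_or_eq_neg_of_mem_weightOrbit_muWt {ν : Fin n → ℚ} (hν : ν ∈ weightOrbit (muWt n))
    (i : Fin n) : ν i = 1 / 2 ∨ ν i = -(1 / 2) := by
  obtain ⟨p, -, rfl⟩ := Finset.mem_image.1 hν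
  rcases Int.units_eq_one_or (p.2 i) with h | h <;> simp [signedPermAct, muWt, h]

lemma altSum_add_rhoWt_eq_zero {ν : Fin n → ℚ} (hν : ν ∈ weightOrbit (muWt n))
    (hne : ν ≠ muWt n) : altSum (ν + rhoWt n) = 0 := by
  have exists_ne : ∃ i, ν i ≠ 1 / 2 := Function.ne_iff.1 hne
  obtain ⟨i, hi, i_max⟩ := (Set.toFinite {i | ν i ≠ 1 / 2}).exists_maximal exists_ne
  have νi : ν i = -(1 / 2) := (apply_eq_or_eq_neg_of_mem_weightOrbit_muWt hν i).resolve_left hi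
  obtain i_last | i_lt : n = i + 1 ∨ (i : ℕ) + 1 < n := by lia
  · have n_cast : (n : ℚ) = i + 1 := by exact_mod_cast i_last
    refine altSum_eq_zero_of_apply_eq_zero (j := i) ?_
    simp only [Pi.add_apply, rhoWt, νi, n_cast]
    ring
  · let j : Fin n := ⟨i + 1, i_lt⟩
    have i_lt_j : i < j := Nat.lt_succ_self i
    have νj : ν j = 1 / 2 := by
      by_contra hj
      exact i_lt_j.not_ge (i_max hj i_lt_j.le)
    refine altSum_eq_zero_of_apply_eq i_lt_j.ne ?_
    simp only [Pi.add_apply, rhoWt, νi, νj, j]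
    push_cast
    ring

end Minuscule

/-- Weyl character formula identity for the Weyl module `V(μ)` of `Spin_{2n+1}`
with minuscule weight `μ = ϖₙ` (`n ≥ 1`): in the group algebra `ℤ[ℚⁿ]`,
`Σ_{w ∈ Wₙ} sgn(w)·e^{w(μ+ρ)} = (Σ_{ν ∈ Wₙ·μ} e^ν)·(Σ_{w ∈ Wₙ} sgn(w)·e^{w(ρ)})`,
i.e. the character of `V(μ)` is the orbit sum of `μ`. -/
theorem weyl_character_mu (n : ℕ) (hn : 1 ≤ n) :
    (∑ p : SignedPerm n,
        AddMonoidAlgebra.single (signedPermAct p (muWt n + rhoWt n))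
          (signedPermSign p)) =
      (∑ ν ∈ Finset.image (fun p : SignedPerm n => signedPermAct p (muWt n))
          Finset.univ,
        AddMonoidAlgebra.single ν (1 : ℤ)) *
      (∑ p : SignedPerm n,
        AddMonoidAlgebra.single (signedPermAct p (rhoWt n))
          (signedPermSign p)) := by
  change altSum (muWt n + rhoWt n) =
    (∑ ν ∈ weightOrbit (muWt n), AddMonoidAlgebra.single ν 1) * altSum (rhoWt n)
  rw [sum_single_mul_altSum fun p => mapsTo_signedPermAct_weightOrbit p (muWt n)]
  exact (Finset.sum_eq_single_of_mem (muWt n) (self_mem_weightOrbit _)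
    fun _ hν hne => altSum_add_rhoWt_eq_zero hν hne).symm
end

section
/- Let n ≥ 1 and let M_n be the n×n integer matrix with M_{ii} = 2 for 1 ≤ i ≤ n−1, M_{nn} = 3, M_{i,i+1} = M_{i+1,i} = 1 for 1 ≤ i ≤ n−1, and all other entries 0. Then there exist matrices P, Q ∈ GL_n(ℤ) such that P·M_n·Q is the diagonal matrix diag(1, 1, …, 1, 2n+1); that is, the elementary divisors of M_n are (1, 1, …, 1, 2n+1). -/
/-- The tridiagonal symmetric `n × n` integer matrix with diagonal
`(2, 2, …, 2, 3)` and sub- and super-diagonal entries all `1`: the Gram matrix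
of the contravariant form on the `ϖₙ`-weight space of the integral Weyl module
`V_ℤ(ϖ₁ + ϖₙ)` for `Spin_{2n+1}`. -/
def gramM (n : ℕ) : Matrix (Fin n) (Fin n) ℤ :=
  fun i j =>
    if i = j then (if (i : ℕ) = n - 1 then 3 else 2)
    else if (i : ℕ) + 1 = (j : ℕ) ∨ (j : ℕ) + 1 = (i : ℕ) then 1 else 0

/-!
If replacing the `i`-th column of `A` by some vector `b` gives an invertible matrix `N`, then
Cramer's rule `A *ᵥ cramer A b = det A • b` says that `A * Q = N * diag(1, …, det A, …, 1)`, where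
`Q` is the identity with `i`-th column `cramer A b`, so `det Q = det N` and `A` has elementary
divisors `(1, …, 1, det A)`.

For `A = gramM n`, take `b = e₁` and `i = n`: deleting the first row and the last column leaves a
unitriangular matrix, so `det N = ±1`. A vector `x` with `A *ᵥ x = (2n + 1) • e₁` and last entry
`±1` then gives `det A = 2n + 1`.
-/

open Matrix

section UnitCramer

variable {ι R : Type*} [Fintype ι] [DecidableEq ι] [CommRing R]

theorem mul_one_updateCol_cramer (A : Matrix ι ι R) (b : ι → R) (i : ι) :
    A * updateCol 1 i (A.cramer b) = A.updateCol i b * diagonal (Function.update 1 i A.det) := by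
  rw [mul_updateCol, mul_one, mulVec_cramer]
  ext k l
  obtain rfl | hl := eq_or_ne l i
  · simp [mul_comm]
  · simp [hl]

theorem det_one_updateCol (x : ι → R) (i : ι) :
    (updateCol (1 : Matrix ι ι R) i x).det = x i := by
  rw [← cramer_apply, cramer_one, Module.End.one_apply]

theorem exists_mul_mul_eq_diagonal_of_isUnit_cramer {A : Matrix ι ι R} {b : ι → R} {i : ι}
    (h : IsUnit (A.cramer b i)) :
    ∃ P Q : Matrix ι ι R, IsUnit P.det ∧ IsUnit Q.det ∧
      P * A * Q = diagonal (Function.update 1 i A.det) := by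
  have hdet : IsUnit (A.updateCol i b).det := by rwa [← cramer_apply]
  refine ⟨(A.updateCol i b)⁻¹, updateCol 1 i (A.cramer b), isUnit_nonsing_inv_det _ hdet,
    by rwa [det_one_updateCol], ?_⟩
  rw [Matrix.mul_assoc, mul_one_updateCol_cramer, nonsing_inv_mul_cancel_left _ _ hdet]

theorem cramer_mulVec (A : Matrix ι ι R) (x : ι → R) : A.cramer (A *ᵥ x) = A.det • x := by
  rw [cramer_eq_adjugate_mulVec, mulVec_mulVec, adjugate_mul, smul_mulVec, one_mulVec]

end UnitCramer

theorem gramM_zero_zero (m : ℕ) : gramM (m + 2) 0 0 = 2 := by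
  simp [gramM]

theorem gramM_zero_succ (m : ℕ) (j : Fin (m + 1)) :
    gramM (m + 2) 0 j.succ = if j = 0 then 1 else 0 := by
  simp [gramM, (Fin.succ_ne_zero j).symm]

theorem gramM_succ_zero (m : ℕ) (i : Fin (m + 1)) :
    gramM (m + 2) i.succ 0 = if i = 0 then 1 else 0 := by
  simp [gramM]

theorem gramM_succ_succ (m : ℕ) (i j : Fin (m + 1)) :
    gramM (m + 2) i.succ j.succ = gramM (m + 1) i j := by
  simp [gramM]

theorem gramM_mulVec_cons (m : ℕ) (a : ℤ) (v : Fin (m + 1) → ℤ) :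
    gramM (m + 2) *ᵥ vecCons a v =
      vecCons (2 * a + v 0) (a • Pi.single 0 1 + gramM (m + 1) *ᵥ v) := by
  ext i
  cases i using Fin.cases with
  | zero =>
    simp [mulVec, dotProduct, Fin.sum_univ_succ (n := m + 1), gramM_zero_zero, gramM_zero_succ]
  | succ i =>
    simp [mulVec, dotProduct, Fin.sum_univ_succ (n := m + 1), gramM_succ_zero, gramM_succ_succ,
      Pi.single_apply]

/-- The alternating vector `(2m + 1, -(2m - 1), 2m - 3, …, (-1) ^ m)`: up to the factor
`det (gramM (m + 1))`, it is the first column of the inverse of `gramM (m + 1)`. The subtraction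
takes place in `ℤ`. -/
def gramVec (m : ℕ) (i : Fin (m + 1)) : ℤ :=
  (-1) ^ (i : ℕ) * (2 * (m - i) + 1)

theorem gramVec_zero (m : ℕ) : gramVec m 0 = 2 * m + 1 := by
  simp [gramVec]

theorem gramVec_last (m : ℕ) : gramVec m (Fin.last m) = (-1) ^ m := by
  simp [gramVec]

theorem gramVec_succ (m : ℕ) : gramVec (m + 1) = vecCons (2 * m + 3 : ℤ) (-gramVec m) := by
  ext i
  cases i using Fin.cases with
  | zero =>
    rw [gramVec_zero, cons_val_zero]
    push_cast
    ring
  | succ i => simp [gramVec, pow_succ]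

theorem gramM_mulVec_gramVec (m : ℕ) :
    gramM (m + 1) *ᵥ gramVec m = (2 * m + 3 : ℤ) • Pi.single 0 1 := by
  induction m with
  | zero =>
    ext i
    fin_cases i
    simp [gramM, gramVec, mulVec, dotProduct]
  | succ m ih =>
    have hsingle : (Pi.single 0 1 : Fin (m + 2) → ℤ) = vecCons 1 0 := by
      ext i
      cases i using Fin.cases <;> simp
    rw [gramVec_succ, gramM_mulVec_cons, mulVec_neg, ih, add_neg_cancel, Pi.neg_apply,
      gramVec_zero, hsingle, smul_cons, smul_zero, smul_eq_mul]
    congr 1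
    push_cast
    ring

theorem det_submatrix_succ_castSucc_gramM (m : ℕ) :
    ((gramM (m + 1)).submatrix Fin.succ Fin.castSucc).det = 1 := by
  rw [det_of_isUpperTriangular]
  · simp [gramM, Fin.ext_iff]
  · intro i j h
    have hji : (j : ℕ) < i := h
    simp only [submatrix_apply, gramM, Fin.ext_iff, Fin.val_succ, Fin.val_castSucc]
    rw [if_neg (by omega), if_neg (by omega)]

theorem cramer_gramM_single_zero_last (m : ℕ) :
    (gramM (m + 1)).cramer (Pi.single 0 1) (Fin.last m) = (-1) ^ m := by
  simp [cramer_eq_adjugate_mulVec, adjugate_fin_succ_eq_det_submatrix,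
    det_submatrix_succ_castSucc_gramM]

theorem det_gramM (m : ℕ) : (gramM (m + 1)).det = 2 * m + 3 := by
  have h := congrFun (cramer_mulVec (gramM (m + 1)) (gramVec m)) (Fin.last m)
  rw [gramM_mulVec_gramVec, map_smul, Pi.smul_apply, Pi.smul_apply,
    cramer_gramM_single_zero_last, gramVec_last, smul_eq_mul, smul_eq_mul] at h
  exact (mul_right_cancel₀ (pow_ne_zero m (by norm_num)) h).symm

/-- For `n ≥ 1`, there are matrices `P, Q ∈ GLₙ(ℤ)` with
`P·Mₙ·Q = diag(1, …, 1, 2n+1)`: the elementary divisors of `Mₙ` are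
`(1, …, 1, 2n+1)`. -/
theorem smith_gramM (n : ℕ) (hn : 1 ≤ n) :
    ∃ P Q : Matrix (Fin n) (Fin n) ℤ, IsUnit P.det ∧ IsUnit Q.det ∧
      P * gramM n * Q =
        Matrix.diagonal (fun i : Fin n =>
          if (i : ℕ) = n - 1 then 2 * (n : ℤ) + 1 else 1) := by
  obtain ⟨m, rfl⟩ := Nat.exists_eq_add_of_le' hn
  have hunit : IsUnit ((gramM (m + 1)).cramer (Pi.single 0 1) (Fin.last m)) := by
    rw [cramer_gramM_single_zero_last]
    exact isUnit_neg_one.pow m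
  have hdiag : (fun i : Fin (m + 1) =>
      if (i : ℕ) = m + 1 - 1 then 2 * ((m + 1 : ℕ) : ℤ) + 1 else 1) =
        Function.update (1 : Fin (m + 1) → ℤ) (Fin.last m) (gramM (m + 1)).det := by
    ext i
    simp only [Function.update_apply, Fin.ext_iff, Fin.val_last, det_gramM, Nat.add_sub_cancel,
      Pi.one_apply]
    push_cast
    ring_nf
  rw [hdiag]
  exact exists_mul_mul_eq_diagonal_of_isUnit_cramer hunit
end

section
/- Let n ≥ 1 and let M_n be the n×n integer matrix with M_{ii} = 2 for 1 ≤ i ≤ n−1, M_{nn} = 3, M_{i,i+1} = M_{i+1,i} = 1 for 1 ≤ i ≤ n−1, and all other entries 0. Then the cokernel ℤ^n / M_n·ℤ^n of the ℤ-linear map given by M_n is isomorphic, as an abelian group, to ℤ/(2n+1)ℤ. -/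
/-
Writing `M` for the matrix, `M = B (1 + 2 u uᵀ) Bᵀ` with `B` unipotent upper bidiagonal and
`u = (1, -1, 1, …)`: the product `B Bᵀ` has diagonal `(2, …, 2, 1)`, and `B u` is `±` the last basis
vector, so the rank-one term supplies the missing `2` in the corner. Since `B` is invertible over
`ℤ`, the cokernel of `M` is that of the transvection `1 + 2 u uᵀ`, and the cokernel of
`x ↦ x + f x • v` is `R ⧸ (1 + f v)` whenever `f` is surjective. Here `1 + f v = 1 + 2 u ⬝ᵥ u`
is `2n + 1`.
-/

open Matrix

section Cokernel

variable {R V : Type*} [CommRing R] [AddCommGroup V] [Module R V]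

theorem mem_range_transvection_iff_dvd (f : Module.Dual R V) (v x : V) :
    x ∈ LinearMap.range (LinearMap.transvection f v) ↔ 1 + f v ∣ f x := by
  constructor
  · rintro ⟨y, rfl⟩
    refine ⟨f y, ?_⟩
    simp only [LinearMap.transvection.apply, map_add, map_smul, smul_eq_mul]
    ring
  · rintro ⟨c, hc⟩
    have hfc : f (x - c • v) = c := by
      rw [map_sub, map_smul, hc, smul_eq_mul]
      ring
    exact ⟨x - c • v, by rw [LinearMap.transvection.apply, hfc, sub_add_cancel]⟩

theorem range_transvection_eq_ker (f : Module.Dual R V) (v : V) :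
    LinearMap.range (LinearMap.transvection f v) =
      LinearMap.ker ((Ideal.span {1 + f v}).mkQ ∘ₗ f) := by
  ext x
  rw [mem_range_transvection_iff_dvd, LinearMap.mem_ker, LinearMap.comp_apply,
    Submodule.mkQ_apply, Submodule.Quotient.mk_eq_zero, Ideal.mem_span_singleton]

/-- The cokernel of the transvection `x ↦ x + f x • v` along a surjective functional `f`,
identified through `f` with `R ⧸ (1 + f v)`. -/
noncomputable def quotRangeTransvectionEquiv (f : Module.Dual R V) (v : V)
    (hf : Function.Surjective f) :
    (V ⧸ LinearMap.range (LinearMap.transvection f v)) ≃ₗ[R] R ⧸ Ideal.span {1 + f v} :=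
  (Submodule.quotEquivOfEq _ _ (range_transvection_eq_ker f v)).trans
    (LinearMap.quotKerEquivOfSurjective _ ((Submodule.mkQ_surjective _).comp hf))

/-- Composing a linear map with isomorphisms on both sides changes its cokernel only up to the
isomorphism induced by the one on the target. -/
def quotRangeCompEquiv {V' W W' : Type*} [AddCommGroup V'] [Module R V'] [AddCommGroup W]
    [Module R W] [AddCommGroup W'] [Module R W'] (p : W ≃ₗ[R] W') (f : V →ₗ[R] W)
    (q : V' ≃ₗ[R] V) :
    (W ⧸ LinearMap.range f) ≃ₗ[R] W' ⧸ LinearMap.range (p.toLinearMap ∘ₗ f ∘ₗ q.toLinearMap) :=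
  Submodule.Quotient.equiv _ _ p <| by
    rw [LinearMap.range_comp, LinearMap.range_comp_of_range_eq_top _ q.range]

end Cokernel

section MatrixCokernel

variable {R ι : Type*} [CommRing R] [Fintype ι] [DecidableEq ι]

theorem toLin'_one_add_vecMulVec (v w : ι → R) :
    toLin' (1 + vecMulVec v w) = LinearMap.transvection (dotProductEquiv R ι w) v := by
  refine LinearMap.ext fun x => ?_
  rw [toLin'_apply, add_mulVec, one_mulVec, vecMulVec_mulVec, LinearMap.transvection.apply,
    dotProductEquiv_apply_apply, op_smul_eq_smul]

theorem dotProductEquiv_surjective_of_isUnit {w : ι → R} {i : ι} (hi : IsUnit (w i)) :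
    Function.Surjective (dotProductEquiv R ι w) := by
  intro c
  obtain ⟨d, hd⟩ := hi.dvd (a := c)
  exact ⟨Pi.single i d, by rw [dotProductEquiv_apply_apply, dotProduct_single, hd]⟩

/-- The cokernel of `P (1 + v wᵀ) Q`, for `P` and `Q` invertible and `w` with a unit entry,
is `R ⧸ (1 + w ⬝ᵥ v)`. -/
noncomputable def quotRangeMulOneAddVecMulVecEquiv {P Q : Matrix ι ι R} (hP : IsUnit P.det)
    (hQ : IsUnit Q.det) (v : ι → R) {w : ι → R} {i : ι} (hi : IsUnit (w i)) :
    ((ι → R) ⧸ LinearMap.range (toLin' (P * (1 + vecMulVec v w) * Q))) ≃ₗ[R]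
      R ⧸ Ideal.span {1 + w ⬝ᵥ v} :=
  let p := toLinearEquiv' P (P.invertibleOfIsUnitDet hP)
  let q := toLinearEquiv' Q (Q.invertibleOfIsUnitDet hQ)
  have h : toLin' (P * (1 + vecMulVec v w) * Q) =
      p.toLinearMap ∘ₗ LinearMap.transvection (dotProductEquiv R ι w) v ∘ₗ q.toLinearMap := by
    rw [mul_assoc, toLin'_mul, toLin'_mul, toLin'_one_add_vecMulVec]
    rfl
  (Submodule.quotEquivOfEq _ _ (congrArg _ h)).trans <|
    (quotRangeCompEquiv p _ q).symm.trans <|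
      quotRangeTransvectionEquiv _ v (dotProductEquiv_surjective_of_isUnit hi)

end MatrixCokernel

section Bidiagonal

variable (R : Type*) [CommRing R] (n : ℕ)

/-- The upper bidiagonal matrix with all diagonal and superdiagonal entries `1`: the unimodular
base change that turns `gramM n` into a rank-one perturbation of the identity. -/
def unitBidiagonal : Matrix (Fin n) (Fin n) R :=
  fun i j => if i = j ∨ (i : ℕ) + 1 = j then 1 else 0

/-- The vector `(1, -1, 1, …)`, which `unitBidiagonal` sends to `±` the last basis vector. -/
def alternatingVec : Fin n → R := fun i => (-1) ^ (i : ℕ)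

theorem det_unitBidiagonal : (unitBidiagonal R n).det = 1 := by
  have h : (unitBidiagonal R n).BlockTriangular id := fun i j (hij : j < i) =>
    if_neg (by rw [Fin.ext_iff]; omega)
  rw [det_of_isUpperTriangular h]
  exact Finset.prod_eq_one fun i _ => if_pos (Or.inl rfl)

theorem alternatingVec_dotProduct_self :
    alternatingVec R n ⬝ᵥ alternatingVec R n = n := by
  simp [alternatingVec, dotProduct, ← mul_pow]

variable {R n}

theorem unitBidiagonal_mulVec_apply (x : Fin n → R) (i : Fin n) :
    (unitBidiagonal R n *ᵥ x) i = x i + if h : (i : ℕ) + 1 < n then x ⟨i + 1, h⟩ else 0 := by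
  have hentry (j : Fin n) : unitBidiagonal R n i j * x j =
      (if i = j then x j else 0) + if (i : ℕ) + 1 = j then x j else 0 := by
    unfold unitBidiagonal
    split_ifs <;> grind
  simp only [mulVec, dotProduct, hentry, Finset.sum_add_distrib, Finset.sum_ite_eq,
    Finset.mem_univ, if_true]
  congr 1
  split_ifs with h
  · rw [Finset.sum_eq_single ⟨i + 1, h⟩ (fun j _ hj => if_neg fun hij => hj (Fin.ext hij.symm))
      (fun h => absurd (Finset.mem_univ _) h), if_pos rfl]
  · exact Finset.sum_eq_zero fun j _ => if_neg (by omega)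

theorem unitBidiagonal_mulVec_alternatingVec_apply (i : Fin n) :
    (unitBidiagonal R n *ᵥ alternatingVec R n) i =
      if (i : ℕ) + 1 = n then (-1) ^ (i : ℕ) else 0 := by
  rw [unitBidiagonal_mulVec_apply]
  unfold alternatingVec
  split_ifs with h₁ h₂ h₂
  · omega
  · rw [pow_succ, mul_neg_one, add_neg_cancel]
  · rw [add_zero]
  · omega

theorem vecMulVec_unitBidiagonal_mulVec_alternatingVec_apply (i j : Fin n) :
    vecMulVec (unitBidiagonal R n *ᵥ alternatingVec R n)
        (unitBidiagonal R n *ᵥ alternatingVec R n) i j =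
      if (i : ℕ) + 1 = n ∧ i = j then 1 else 0 := by
  rw [vecMulVec_apply, unitBidiagonal_mulVec_alternatingVec_apply,
    unitBidiagonal_mulVec_alternatingVec_apply]
  split_ifs with hi hj hij
  · obtain rfl : i = j := by omega
    rw [← mul_pow, neg_one_mul, neg_neg, one_pow]
  all_goals grind

theorem unitBidiagonal_mul_transpose_apply (i j : Fin n) :
    (unitBidiagonal R n * (unitBidiagonal R n)ᵀ) i j =
      unitBidiagonal R n j i +
        if h : (i : ℕ) + 1 < n then unitBidiagonal R n j ⟨i + 1, h⟩ else 0 :=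
  unitBidiagonal_mulVec_apply (unitBidiagonal R n j) i

end Bidiagonal

theorem gramM_eq_mul_transpose_add_vecMulVec (n : ℕ) :
    gramM n = unitBidiagonal ℤ n * (unitBidiagonal ℤ n)ᵀ +
      (2 : ℤ) • vecMulVec (unitBidiagonal ℤ n *ᵥ alternatingVec ℤ n)
        (unitBidiagonal ℤ n *ᵥ alternatingVec ℤ n) := by
  ext i j
  rw [Matrix.add_apply, Matrix.smul_apply, unitBidiagonal_mul_transpose_apply,
    vecMulVec_unitBidiagonal_mulVec_alternatingVec_apply]
  simp only [gramM, unitBidiagonal, Fin.ext_iff, smul_eq_mul]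
  split_ifs <;> omega

theorem gramM_eq_mul_one_add_vecMulVec_mul (n : ℕ) :
    gramM n = unitBidiagonal ℤ n *
      (1 + vecMulVec ((2 : ℤ) • alternatingVec ℤ n) (alternatingVec ℤ n)) *
        (unitBidiagonal ℤ n)ᵀ := by
  rw [gramM_eq_mul_transpose_add_vecMulVec, mul_add, mul_one, add_mul, mul_vecMulVec,
    vecMulVec_mul, vecMul_transpose, mulVec_smul, smul_vecMulVec]

/-- For `n ≥ 1`, the cokernel `ℤⁿ / Mₙ·ℤⁿ` of the `ℤ`-linear map given by the
tridiagonal matrix `Mₙ` is isomorphic, as an abelian group, to `ℤ/(2n+1)ℤ`. -/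
theorem cokernel_gramM (n : ℕ) (hn : 1 ≤ n) :
    Nonempty
      (((Fin n → ℤ) ⧸ LinearMap.range (Matrix.toLin' (gramM n))) ≃+
        ZMod (2 * n + 1)) := by
  let B := unitBidiagonal ℤ n
  let u := alternatingVec ℤ n
  have hB : IsUnit B.det := det_unitBidiagonal ℤ n ▸ isUnit_one
  have hBt : IsUnit Bᵀ.det := by rwa [det_transpose]
  have hu : IsUnit (u ⟨0, hn⟩) := isUnit_one.neg.pow _
  have hval : 1 + u ⬝ᵥ (2 : ℤ) • u = (2 * n + 1 : ℕ) := by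
    rw [dotProduct_smul, alternatingVec_dotProduct_self]
    push_cast
    ring
  have e := quotRangeMulOneAddVecMulVecEquiv hB hBt ((2 : ℤ) • u) hu
  rw [← gramM_eq_mul_one_add_vecMulVec_mul, hval] at e
  exact ⟨e.toAddEquiv.trans (Int.quotientSpanNatEquivZMod (2 * n + 1)).toAddEquiv⟩
end
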